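/- arXiv:1801.06290 — 2 statements merged into one kernel-verified Lean document; each statement's English description precedes it below -/
import Mathlib

section
/- Every finite set S of n ≥ 2 points in general position in the plane admits a geometric graph G on S with O(n² · log log n / log n) edges such that every pair of points of S is connected in G by a path whose edge vectors all lie in a common closed 90° wedge (i.e., G is angle-monotone of width 90°). Consequently G is a √2-spanner of S. -/
open Real

noncomputable section

/-- Euclidean dot product of two plane vectors (represented as complex numbers). -/
def dot2 (u v : ℂ) : ℝ := u.re * v.re + u.im * v.im

/-- A finite planar point set is in general position if no three distinct points are collinear. -/
def GenPos (S : Finset ℂ) : Prop :=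
  ∀ p ∈ S, ∀ q ∈ S, ∀ r ∈ S, p ≠ q → p ≠ r → q ≠ r → ¬ Collinear ℝ ({p, q, r} : Set ℂ)

/-!
A convex or concave chain whose edge directions lie in one quadrant can be cut, at any direction
`θ` of that quadrant, into a part flatter than `θ` and a part steeper than `θ`. Seen as paths, the
flat part of one chain and the steep part of another are monotone with respect to perpendicular
wedges, and such a pair is served by linearly many extra edges: the vector from a point of the first
to a point of the second lies, up to sign, in one of the two wedges, and a single edge to the last
suitable point of the corresponding path suffices. Recursing on (flat, flat) and (steep, steep)
serves two chains with `k` points by `O(k log k)` edges. By Erdős–Szekeres, a set of `n` points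
splits into `O(n / k)` chains with `k = Θ(log n)`, and serving all pairs of chains takes
`O((n / k)² · k log k) = O(n² log log n / log n)` edges.
-/

namespace AngleMonotone

open Set Relation
open scoped Finset

variable {α β : ℝ} {E : Set (ℂ × ℂ)} {x y : ℂ}

section Wedge

/-- The closed `90°` wedge with apex `0` that extends counterclockwise from the direction `α`,
given in polar coordinates. -/
def wedge (α : ℝ) : Set ℂ :=
  {v | ∃ r : ℝ, 0 ≤ r ∧ ∃ φ ∈ Icc α (α + π / 2), v = r * Complex.exp (φ * Complex.I)}

theorem mem_wedge_of_arg_mem {v : ℂ} (h : v.arg ∈ Icc α (α + π / 2)) : v ∈ wedge α :=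
  ⟨‖v‖, norm_nonneg v, v.arg, h, (Complex.norm_mul_exp_arg_mul_I v).symm⟩

theorem neg_mem_wedge_add_pi {v : ℂ} (hv : v ∈ wedge α) : -v ∈ wedge (α + π) := by
  obtain ⟨r, hr, φ, hφ, rfl⟩ := hv
  refine ⟨r, hr, φ + π, ⟨by linarith [hφ.1], by linarith [hφ.2]⟩, ?_⟩
  push_cast
  rw [add_mul, Complex.exp_add, Complex.exp_pi_mul_I]
  ring

theorem mem_wedge_or_neg_mem_wedge (α : ℝ) (v : ℂ) :
    (v ∈ wedge α ∨ -v ∈ wedge α) ∨ (v ∈ wedge (α + π / 2) ∨ -v ∈ wedge (α + π / 2)) := by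
  set φ := toIcoMod two_pi_pos α v.arg with hφ
  obtain ⟨hαφ, hφα⟩ : φ ∈ Ico α (α + 2 * π) := toIcoMod_mem_Ico two_pi_pos α v.arg
  have hv : v = ‖v‖ * Complex.exp (φ * Complex.I) := by
    rw [hφ, toIcoMod, Complex.ofReal_sub, sub_mul, zsmul_eq_mul]
    push_cast
    rw [mul_assoc (_ : ℂ) (2 * (π : ℂ)), Complex.exp_sub, Complex.exp_int_mul_two_pi_mul_I, div_one,
      Complex.norm_mul_exp_arg_mul_I]
  have hneg : -v = ‖v‖ * Complex.exp ((φ - π : ℝ) * Complex.I) := by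
    push_cast
    rw [sub_mul, Complex.exp_sub, Complex.exp_pi_mul_I, div_neg, div_one, mul_neg, ← hv]
  rcases le_total φ (α + π / 2) with h₁ | h₁
  · exact .inl (.inl ⟨‖v‖, norm_nonneg v, φ, ⟨hαφ, h₁⟩, hv⟩)
  rcases le_total φ (α + π) with h₂ | h₂
  · exact .inr (.inl ⟨‖v‖, norm_nonneg v, φ, ⟨h₁, by linarith⟩, hv⟩)
  rcases le_total φ (α + 3 * π / 2) with h₃ | h₃
  · exact .inl (.inr ⟨‖v‖, norm_nonneg v, φ - π, ⟨by linarith, by linarith⟩, hneg⟩)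
  · exact .inr (.inr ⟨‖v‖, norm_nonneg v, φ - π, ⟨by linarith, by linarith⟩, hneg⟩)

theorem norm_mul_cos_pi_div_four_le_dot2 {v : ℂ} (hv : v ∈ wedge α) :
    ‖v‖ * cos (π / 4) ≤ dot2 v (Complex.exp ((α + π / 4 : ℝ) * Complex.I)) := by
  obtain ⟨r, hr, φ, hφ, rfl⟩ := hv
  have hdot : dot2 (r * Complex.exp (φ * Complex.I))
      (Complex.exp ((α + π / 4 : ℝ) * Complex.I)) = r * cos (φ - (α + π / 4)) := by
    rw [dot2, Complex.re_ofReal_mul, Complex.im_ofReal_mul]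
    simp only [Complex.exp_ofReal_mul_I_re, Complex.exp_ofReal_mul_I_im, cos_sub]
    ring
  have hcos : cos (π / 4) ≤ cos (φ - (α + π / 4)) := by
    rw [← cos_abs (φ - _)]
    refine cos_le_cos_of_nonneg_of_le_pi (abs_nonneg _) (by linarith [pi_pos]) (abs_le.2 ⟨?_, ?_⟩)
    · linarith [hφ.1]
    · linarith [hφ.2]
  rw [hdot, norm_mul, Complex.norm_exp_ofReal_mul_I, Complex.norm_of_nonneg hr, mul_one]
  exact mul_le_mul_of_nonneg_left hcos hr

end Wedge

section Paths

/-- `x` and `y` are joined by an edge of the undirected graph `E`, stored as a set of arbitrarily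
oriented pairs, and the vector from `x` to `y` lies in `wedge α`. -/
def WedgeStep (E : Set (ℂ × ℂ)) (α : ℝ) (x y : ℂ) : Prop :=
  ((x, y) ∈ E ∨ (y, x) ∈ E) ∧ y - x ∈ wedge α

/-- Some path of `E` leads from `x` to `y` with all its edge vectors in `wedge α`. -/
def WedgePath (E : Set (ℂ × ℂ)) (α : ℝ) : ℂ → ℂ → Prop :=
  ReflTransGen (WedgeStep E α)

/-- `x` and `y` are joined by a path of `E` which is angle-monotone of width `90°`. -/
def Joined (E : Set (ℂ × ℂ)) (x y : ℂ) : Prop :=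
  ∃ α, WedgePath E α x y

/-- Any two points of `A` are joined, in one of the two orders, by a path of `E` with edge vectors
in `wedge α`; for instance `A` is the vertex set of a path that is monotone in this sense. -/
def WedgeTotal (E : Set (ℂ × ℂ)) (α : ℝ) (A : Set ℂ) : Prop :=
  ∀ x ∈ A, ∀ y ∈ A, WedgePath E α x y ∨ WedgePath E α y x

theorem WedgeStep.reverse (h : WedgeStep E α x y) : WedgeStep E (α + π) y x :=
  ⟨h.1.symm, neg_sub y x ▸ neg_mem_wedge_add_pi h.2⟩

theorem WedgePath.mono {E' : Set (ℂ × ℂ)} (hE : E ⊆ E') (h : WedgePath E α x y) :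
    WedgePath E' α x y :=
  ReflTransGen.mono (fun _ _ hs ↦ ⟨hs.1.imp (hE ·) (hE ·), hs.2⟩) _ _ h

theorem WedgePath.reverse (h : WedgePath E α x y) : WedgePath E (α + π) y x :=
  reflTransGen_swap.1 (ReflTransGen.mono (fun _ _ hs ↦ hs.reverse) _ _ h)

theorem Joined.mono {E' : Set (ℂ × ℂ)} (hE : E ⊆ E') (h : Joined E x y) : Joined E' x y :=
  h.imp fun _ hα ↦ hα.mono hE

theorem Joined.symm (h : Joined E x y) : Joined E y x :=
  let ⟨α, hα⟩ := h
  ⟨α + π, hα.reverse⟩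

theorem joined_of_edge (h : (x, y) ∈ E) : Joined E x y := by
  refine ⟨(y - x).arg, .single ⟨.inl h, mem_wedge_of_arg_mem ⟨le_rfl, ?_⟩⟩⟩
  linarith [pi_pos]

theorem WedgeTotal.add_pi {A : Set ℂ} (hA : WedgeTotal E α A) : WedgeTotal E (α + π) A :=
  fun x hx y hy ↦ (hA x hx y hy).symm.imp (·.reverse) (·.reverse)

theorem WedgeTotal.exists_last {A : Set ℂ} (hA : WedgeTotal E α A) (hfin : A.Finite)
    (hne : A.Nonempty) : ∃ z ∈ A, ∀ x ∈ A, WedgePath E α x z := by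
  have : Nonempty A := hne.to_subtype
  have : Fintype A := hfin.fintype
  have : IsTrans ℂ (WedgePath E α) := ⟨fun _ _ _ ↦ ReflTransGen.trans⟩
  have hdir : Directed (WedgePath E α) ((↑) : A → ℂ) := fun x y ↦
    (hA x x.2 y y.2).elim (fun h ↦ ⟨y, h, .refl⟩) fun h ↦ ⟨x, .refl, h⟩
  obtain ⟨z, hz⟩ := hdir.finset_le Finset.univ
  exact ⟨z, z.2, fun x hx ↦ hz ⟨x, hx⟩ (Finset.mem_univ _)⟩

theorem wedgeTotal_image {a : ℕ → ℂ} {I : Set ℕ} (hI : I.OrdConnected)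
    (h : ∀ i ∈ I, i + 1 ∈ I → WedgeStep E α (a i) (a (i + 1))) : WedgeTotal E α (a '' I) := by
  have hle : ∀ i ∈ I, ∀ j ∈ I, i ≤ j → WedgePath E α (a i) (a j) := fun i hi j hj hij ↦
    reflTransGen_of_succ_of_le (fun m n ↦ WedgeStep E α (a m) (a n))
      (fun m hm ↦ h m (hI.out hi hj ⟨hm.1, hm.2.le⟩) (hI.out hi hj ⟨hm.1.trans m.le_succ, hm.2⟩))
      hij |> ReflTransGen.lift a (fun _ _ hs ↦ hs) i j
  rintro _ ⟨i, hi, rfl⟩ _ ⟨j, hj, rfl⟩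
  exact (le_total i j).imp (hle i hi j hj) (hle j hj i hi)

end Paths

section Servable

variable {S : Finset ℂ} {n m : ℕ} {P Q : Set (ℂ × ℂ)}

/-- All pairs in `P` become joined after adding at most `n` edges between points of `S` to the
graph `E`. -/
def Servable (E : Set (ℂ × ℂ)) (S : Finset ℂ) (n : ℕ) (P : Set (ℂ × ℂ)) : Prop :=
  ∃ T ⊆ S ×ˢ S, #T ≤ n ∧ ∀ p ∈ P, Joined (E ∪ T) p.1 p.2

theorem Servable.mono (h : Servable E S n P) (hnm : n ≤ m) (hQP : Q ⊆ P) : Servable E S m Q :=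
  let ⟨T, hTS, hTn, hT⟩ := h
  ⟨T, hTS, hTn.trans hnm, fun p hp ↦ hT p (hQP hp)⟩

theorem Servable.swap (h : Servable E S n P) : Servable E S n (Prod.swap ⁻¹' P) :=
  let ⟨T, hTS, hTn, hT⟩ := h
  ⟨T, hTS, hTn, fun p hp ↦ (hT p.swap hp).symm⟩

theorem Servable.biUnion {ι : Type*} {I : Finset ι} {P : ι → Set (ℂ × ℂ)}
    (h : ∀ i ∈ I, Servable E S n (P i)) : Servable E S (#I * n) (⋃ i ∈ I, P i) := by
  choose! T hTS hTn hT using h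
  refine ⟨I.biUnion T, Finset.biUnion_subset.2 hTS,
    Finset.card_biUnion_le_card_mul _ _ _ hTn, fun p hp ↦ ?_⟩
  obtain ⟨i, hi, hpi⟩ := mem_iUnion₂.1 hp
  exact (hT i hi p hpi).mono
    (union_subset_union_right _ (Finset.coe_subset.2 (Finset.subset_biUnion_of_mem T hi)))

theorem Servable.union (hP : Servable E S n P) (hQ : Servable E S m Q) :
    Servable E S (n + m) (P ∪ Q) := by
  obtain ⟨T, hTS, hTn, hT⟩ := hP
  obtain ⟨U, hUS, hUm, hU⟩ := hQ
  refine ⟨T ∪ U, Finset.union_subset hTS hUS,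
    (Finset.card_union_le T U).trans (add_le_add hTn hUm), ?_⟩
  rintro p (hp | hp)
  · exact (hT p hp).mono (by grind)
  · exact (hU p hp).mono (by grind)

theorem Servable.union_prod_union {A₁ A₂ B₁ B₂ : Set ℂ} {n₁₁ n₂₂ n₁₂ n₂₁ : ℕ}
    (h₁₁ : Servable E S n₁₁ (A₁ ×ˢ B₁)) (h₂₂ : Servable E S n₂₂ (A₂ ×ˢ B₂))
    (h₁₂ : Servable E S n₁₂ (A₁ ×ˢ B₂)) (h₂₁ : Servable E S n₂₁ (A₂ ×ˢ B₁)) :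
    Servable E S (n₁₁ + n₂₂ + (n₁₂ + n₂₁)) ((A₁ ∪ A₂) ×ˢ (B₁ ∪ B₂)) :=
  ((h₁₁.union h₂₂).union (h₁₂.union h₂₁)).mono le_rfl (by grind)

theorem servable_prod {A B : Finset ℂ} (hA : A ⊆ S) (hB : B ⊆ S) :
    Servable E S (#A * #B) (A ×ˢ B) :=
  ⟨A ×ˢ B, Finset.product_subset_product hA hB, (Finset.card_product A B).le,
    fun _ hp ↦ joined_of_edge (.inr (by simpa using hp))⟩

/-- Each `y ∈ B` needs only the edge to the last `x ∈ A` with `y - x ∈ wedge α`: the earlier ones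
reach `y` through it. -/
theorem WedgeTotal.servable_sub_mem {A B : Finset ℂ} (hAα : WedgeTotal E α A) (hA : A ⊆ S)
    (hB : B ⊆ S) : Servable E S #B {p | p.1 ∈ A ∧ p.2 ∈ B ∧ p.2 - p.1 ∈ wedge α} := by
  have hlast : ∀ y ∈ B, ∃ z ∈ S, ∀ x ∈ A, y - x ∈ wedge α →
      WedgePath E α x z ∧ y - z ∈ wedge α := by
    intro y hy
    rcases {x | x ∈ A ∧ y - x ∈ wedge α}.eq_empty_or_nonempty with hempty | hne
    · exact ⟨y, hB hy, fun x hx hxy ↦ (hempty.subset ⟨hx, hxy⟩).elim⟩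
    · have htotal : WedgeTotal E α {x | x ∈ A ∧ y - x ∈ wedge α} := fun x hx z hz ↦
        hAα x hx.1 z hz.1
      obtain ⟨z, hz, hlast⟩ := htotal.exists_last (A.finite_toSet.subset fun _ ↦ And.left) hne
      exact ⟨z, hA hz.1, fun x hx hxy ↦ ⟨hlast x ⟨hx, hxy⟩, hz.2⟩⟩
  choose! z hzS hz using hlast
  refine ⟨B.image fun y ↦ (z y, y), ?_, Finset.card_image_le, ?_⟩
  · exact Finset.image_subset_iff.2 fun y hy ↦ Finset.mk_mem_product (hzS y hy) (hB hy)
  · rintro ⟨x, y⟩ ⟨hx, hy, hxy⟩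
    obtain ⟨hxz, hzy⟩ := hz y hy x hx hxy
    have hedge : (z y, y) ∈ E ∪ (B.image fun y ↦ (z y, y) : Finset (ℂ × ℂ)) :=
      .inr (Finset.mem_coe.2 (Finset.mem_image_of_mem _ hy))
    exact ⟨α, (hxz.mono subset_union_left).tail ⟨.inl hedge, hzy⟩⟩

theorem WedgeTotal.servable_sub_mem_or {A B : Finset ℂ} (hAα : WedgeTotal E α A) (hA : A ⊆ S)
    (hB : B ⊆ S) : Servable E S (2 * #B)
      {p | p.1 ∈ A ∧ p.2 ∈ B ∧ (p.2 - p.1 ∈ wedge α ∨ -(p.2 - p.1) ∈ wedge α)} := by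
  refine ((hAα.servable_sub_mem hA hB).union (hAα.add_pi.servable_sub_mem hA hB)).mono
    (two_mul _).ge ?_
  rintro p ⟨h₁, h₂, h | h⟩
  · exact .inl ⟨h₁, h₂, h⟩
  · exact .inr ⟨h₁, h₂, by simpa using neg_mem_wedge_add_pi h⟩

/-- The vector from `x ∈ A` to `y ∈ B` lies, up to sign, in `wedge α`, where the path `A` helps, or
in `wedge (α + π / 2)`, where the path `B` does. -/
theorem WedgeTotal.servable_prod {A B : Finset ℂ} (hAα : WedgeTotal E α A)
    (hBα : WedgeTotal E (α + π / 2) B) (hA : A ⊆ S) (hB : B ⊆ S) :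
    Servable E S (2 * (#A + #B)) (A ×ˢ B) := by
  refine ((hAα.servable_sub_mem_or hA hB).union (hBα.servable_sub_mem_or hB hA).swap).mono
    (by omega) ?_
  rintro ⟨x, y⟩ ⟨hx, hy⟩
  rcases mem_wedge_or_neg_mem_wedge α (y - x) with h | h
  · exact .inl ⟨hx, hy, h⟩
  · exact .inr ⟨hy, hx, h.symm.imp (by simp) (by simp)⟩

end Servable

section Chains

variable {S : Finset ℂ} {k l : ℕ} {a b : ℕ → ℂ}

/-- The direction of the `i`-th edge of the polygonal path `a`, which is `0` if the edge is
degenerate. -/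
def stepArg (a : ℕ → ℂ) (i : ℕ) : ℝ :=
  (a (i + 1) - a i).arg

/-- The first `k` vertices of `a` lie in `S` and the first `k` edges in `E`. -/
def IsWalk (E : Set (ℂ × ℂ)) (S : Finset ℂ) (k : ℕ) (a : ℕ → ℂ) : Prop :=
  ∀ i < k, a i ∈ S ∧ (a i, a (i + 1)) ∈ E

/-- The first `k` edges of `a` form a convex or concave chain with directions in the quadrant
`[β, β + π / 2]`. -/
structure QuadrantChain (β : ℝ) (k : ℕ) (a : ℕ → ℂ) : Prop where
  arg_mem : ∀ i < k, stepArg a i ∈ Icc β (β + π / 2)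
  monotoneOn_or_antitoneOn : MonotoneOn (stepArg a) (Iio k) ∨ AntitoneOn (stepArg a) (Iio k)

theorem QuadrantChain.ordConnected_setOf (ha : QuadrantChain β k a) {I : Set ℕ}
    (hI : I.OrdConnected) (hIk : I ⊆ Iio k) {U : Set ℝ} (hU : U.OrdConnected) :
    {i | i ∈ I ∧ stepArg a i ∈ U}.OrdConnected := by
  refine ⟨fun i hi j hj m hm ↦ ?_⟩
  have hmI : m ∈ I := hI.out hi.1 hj.1 hm
  refine ⟨hmI, ?_⟩
  rcases ha.monotoneOn_or_antitoneOn with h | h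
  · exact hU.out hi.2 hj.2
      ⟨h (hIk hi.1) (hIk hmI) hm.1, h (hIk hmI) (hIk hj.1) hm.2⟩
  · exact hU.out hj.2 hi.2
      ⟨h (hIk hmI) (hIk hj.1) hm.2, h (hIk hi.1) (hIk hmI) hm.1⟩

theorem QuadrantChain.exists_split (ha : QuadrantChain β k a) {I : Finset ℕ}
    (hI : (I : Set ℕ).OrdConnected) (hIk : (I : Set ℕ) ⊆ Iio k) (θ : ℝ) :
    ∃ I₁ I₂, I₁ ∪ I₂ = I ∧ #I₁ + #I₂ = #I ∧ (I₁ : Set ℕ).OrdConnected ∧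
      (I₂ : Set ℕ).OrdConnected ∧ (∀ i ∈ I₁, stepArg a i ≤ θ) ∧ ∀ i ∈ I₂, θ ≤ stepArg a i := by
  refine ⟨{i ∈ I | stepArg a i ≤ θ}, {i ∈ I | ¬ stepArg a i ≤ θ},
    Finset.filter_union_filter_not_eq _ I, Finset.card_filter_add_card_filter_not _, ?_, ?_,
    by grind, by grind⟩
  · simpa using ha.ordConnected_setOf hI hIk (ordConnected_Iic (a := θ))
  · simpa using ha.ordConnected_setOf hI hIk (ordConnected_Ioi (a := θ))

theorem QuadrantChain.exists_halves (ha : QuadrantChain β k a) {i n : ℕ} (hn : 0 < n)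
    (hk : i + 2 * n ≤ k) : ∃ i₁ i₂, (i₁ = i ∧ i₂ = i + n ∨ i₁ = i + n ∧ i₂ = i) ∧
      (∀ m ∈ Ico i₁ (i₁ + n), stepArg a m ≤ stepArg a (i + n)) ∧
      ∀ m ∈ Ico i₂ (i₂ + n), stepArg a (i + n) ≤ stepArg a m := by
  rcases ha.monotoneOn_or_antitoneOn with h | h
  · refine ⟨i, i + n, .inl ⟨rfl, rfl⟩, fun m hm ↦ h ?_ ?_ hm.2.le, fun m hm ↦ h ?_ ?_ hm.1⟩ <;>
      grind
  · refine ⟨i + n, i, .inr ⟨rfl, rfl⟩, fun m hm ↦ h ?_ ?_ hm.1, fun m hm ↦ h ?_ ?_ hm.2.le⟩ <;>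
      grind

theorem IsWalk.wedgeTotal_image (ha : IsWalk E S k a) {I : Set ℕ} (hI : I.OrdConnected)
    (hIk : I ⊆ Iio k) (hα : ∀ i ∈ I, stepArg a i ∈ Icc α (α + π / 2)) :
    WedgeTotal E α (a '' I) :=
  AngleMonotone.wedgeTotal_image hI fun i hi _ ↦
    ⟨.inl (ha i (hIk hi)).2, mem_wedge_of_arg_mem (hα i hi)⟩

theorem IsWalk.image_subset (ha : IsWalk E S k a) {I : Finset ℕ} (hIk : (I : Set ℕ) ⊆ Iio k) :
    I.image a ⊆ S :=
  Finset.image_subset_iff.2 fun i hi ↦ (ha i (hIk hi)).1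

theorem IsWalk.servable_image_prod_image (ha : IsWalk E S k a) (hb : IsWalk E S l b)
    {I J : Finset ℕ} (hI : (I : Set ℕ).OrdConnected) (hIk : (I : Set ℕ) ⊆ Iio k)
    (hJ : (J : Set ℕ).OrdConnected) (hJl : (J : Set ℕ) ⊆ Iio l)
    (hIα : ∀ i ∈ I, stepArg a i ∈ Icc α (α + π / 2))
    (hJα : ∀ j ∈ J, stepArg b j ∈ Icc (α + π / 2) (α + π)) :
    Servable E S (2 * (#I + #J)) ((a '' I) ×ˢ (b '' J)) := by
  have hA : WedgeTotal E α (I.image a) := by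
    simpa using ha.wedgeTotal_image hI hIk hIα
  have hB : WedgeTotal E (α + π / 2) (J.image b) := by
    simpa using hb.wedgeTotal_image hJ hJl fun j hj ↦ ⟨(hJα j hj).1, by linarith [(hJα j hj).2]⟩
  refine (hA.servable_prod hB (ha.image_subset hIk) (hb.image_subset hJl)).mono ?_ (by simp)
  gcongr <;> exact Finset.card_image_le

theorem QuadrantChain.servable_flat_prod_steep (ha : QuadrantChain β k a)
    (hb : QuadrantChain β l b) (hak : IsWalk E S k a) (hbl : IsWalk E S l b) {θ : ℝ}
    (hθ : θ ∈ Icc β (β + π / 2)) {I J : Finset ℕ} (hI : (I : Set ℕ).OrdConnected)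
    (hIk : (I : Set ℕ) ⊆ Iio k) (hJ : (J : Set ℕ).OrdConnected) (hJl : (J : Set ℕ) ⊆ Iio l)
    (hIθ : ∀ i ∈ I, stepArg a i ≤ θ) (hJθ : ∀ j ∈ J, θ ≤ stepArg b j) :
    Servable E S (2 * (#I + #J)) ((a '' I) ×ˢ (b '' J)) := by
  refine hak.servable_image_prod_image hbl (α := θ - π / 2) hI hIk hJ hJl
    (fun i hi ↦ ⟨?_, ?_⟩) fun j hj ↦ ⟨?_, ?_⟩
  · linarith [(ha.arg_mem i (hIk hi)).1, hθ.2]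
  · linarith [hIθ i hi]
  · linarith [hJθ j hj]
  · linarith [(hb.arg_mem j (hJl hj)).2, hθ.1]

/-- Cut both chains at the direction `θ` of the middle edge of the first. The flat part of either
chain and the steep part of the other turn within perpendicular wedges, which leaves the pairs
(flat, flat) and (steep, steep) to the recursion. -/
theorem QuadrantChain.servable_image_Ico_prod_image (ha : QuadrantChain β k a)
    (hb : QuadrantChain β l b) (hak : IsWalk E S k a) (hbl : IsWalk E S l b) (d : ℕ) :
    ∀ (i : ℕ) (J : Finset ℕ), i + 2 ^ d ≤ k → (J : Set ℕ).OrdConnected → (J : Set ℕ) ⊆ Iio l →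
      Servable E S (2 * (2 ^ d + #J) * (d + 1)) ((a '' Ico i (i + 2 ^ d)) ×ˢ (b '' J)) := by
  induction d with
  | zero =>
    intro i J hi _ hJl
    have hA : {a i} ⊆ S := by simpa using (hak i (by omega)).1
    refine (servable_prod hA (hbl.image_subset hJl)).mono ?_ (by simp [Ico_add_one_right_eq_Icc])
    grind [Finset.card_image_le (s := J) (f := b)]
  | succ d ih =>
    intro i J hi hJ hJl
    obtain ⟨i₁, i₂, hi₁₂, hflat, hsteep⟩ :=
      ha.exists_halves (i := i) (Nat.two_pow_pos d) (by omega)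
    set θ := stepArg a (i + 2 ^ d)
    have hθ : θ ∈ Icc β (β + π / 2) := ha.arg_mem _ (by grind)
    obtain ⟨J₁, J₂, hJ₁₂, hcard, hJ₁, hJ₂, hJ₁θ, hJ₂θ⟩ := hb.exists_split hJ hJl θ
    have hJ₁l : (J₁ : Set ℕ) ⊆ Iio l := fun j hj ↦ hJl (hJ₁₂ ▸ Finset.mem_union_left _ hj)
    have hJ₂l : (J₂ : Set ℕ) ⊆ Iio l := fun j hj ↦ hJl (hJ₁₂ ▸ Finset.mem_union_right _ hj)
    have hflat_steep : Servable E S (2 * (2 ^ d + #J₂))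
        ((a '' Ico i₁ (i₁ + 2 ^ d)) ×ˢ (b '' J₂)) := by
      simpa using ha.servable_flat_prod_steep hb hak hbl hθ
        (I := Finset.Ico i₁ (i₁ + 2 ^ d)) (by simpa using ordConnected_Ico) (by grind) hJ₂ hJ₂l
        (by simpa using hflat) hJ₂θ
    have hsteep_flat : Servable E S (2 * (#J₁ + 2 ^ d))
        ((a '' Ico i₂ (i₂ + 2 ^ d)) ×ˢ (b '' J₁)) := by
      simpa using (hb.servable_flat_prod_steep ha hbl hak hθ hJ₁ hJ₁l
        (J := Finset.Ico i₂ (i₂ + 2 ^ d)) (by simpa using ordConnected_Ico) (by grind)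
        hJ₁θ (by simpa using hsteep)).swap
    have hIco : Ico i (i + 2 ^ (d + 1)) = Ico i₁ (i₁ + 2 ^ d) ∪ Ico i₂ (i₂ + 2 ^ d) := by grind
    rw [hIco, ← hJ₁₂, Finset.coe_union, image_union, image_union]
    refine ((ih i₁ J₁ (by grind) hJ₁ hJ₁l).union_prod_union (ih i₂ J₂ (by grind) hJ₂ hJ₂l)
      hflat_steep hsteep_flat).mono ?_ subset_rfl
    rw [hJ₁₂, pow_succ, ← hcard]
    exact le_of_eq (by ring)

/-- The first `k` edges of `a` form a convex or concave chain, all of them going right and up or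
all of them going right and down. -/
def SlopeChain (k : ℕ) (a : ℕ → ℂ) : Prop :=
  QuadrantChain (-(π / 2)) k a ∨ QuadrantChain 0 k a

theorem QuadrantChain.servable_down_prod_up (ha : QuadrantChain (-(π / 2)) k a)
    (hb : QuadrantChain 0 l b) (hak : IsWalk E S k a) (hbl : IsWalk E S l b) :
    Servable E S (2 * (k + l)) ((a '' Iio k) ×ˢ (b '' Iio l)) := by
  simpa using hak.servable_image_prod_image hbl (α := -(π / 2))
    (I := Finset.Iio k) (J := Finset.Iio l) (by simpa using ordConnected_Iio) (by simp)
    (by simpa using ordConnected_Iio) (by simp) (by simpa using ha.arg_mem)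
    (by simpa [neg_add_eq_sub, sub_half] using hb.arg_mem)

theorem SlopeChain.servable {d : ℕ} (ha : SlopeChain (2 ^ d) a) (hb : SlopeChain (2 ^ d) b)
    (haS : IsWalk E S (2 ^ d) a) (hbS : IsWalk E S (2 ^ d) b) :
    Servable E S (4 * 2 ^ d * (d + 1)) ((a '' Iio (2 ^ d)) ×ˢ (b '' Iio (2 ^ d))) := by
  have hsame {β : ℝ} (ha : QuadrantChain β (2 ^ d) a) (hb : QuadrantChain β (2 ^ d) b) :
      Servable E S (4 * 2 ^ d * (d + 1)) ((a '' Iio (2 ^ d)) ×ˢ (b '' Iio (2 ^ d))) := by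
    refine (ha.servable_image_Ico_prod_image hb haS hbS d 0 (Finset.Iio (2 ^ d)) (by simp)
      (by simpa using ordConnected_Iio) (by simp)).mono ?_ ?_
    · rw [Nat.card_Iio]
      exact le_of_eq (by ring)
    · simp [← Ico_bot]
  have hcost : 2 * (2 ^ d + 2 ^ d) ≤ 4 * 2 ^ d * (d + 1) := by grind
  rcases ha with ha | ha <;> rcases hb with hb | hb
  · exact hsame ha hb
  · exact (ha.servable_down_prod_up hb haS hbS).mono hcost subset_rfl
  · exact (hb.servable_down_prod_up ha hbS haS).swap.mono hcost (by simp)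
  · exact hsame ha hb

end Chains

section CupsAndCaps

variable {ι : Type*} [LinearOrder ι] {U D : ι → ι → ι → Prop} {X Y : Finset ι} {k l : ℕ}
  {c c' : ℕ → ι}

/-- `c 0 < c 1 < ⋯ < c k` are points of `X` whose consecutive triples satisfy `U`. For a triple of
points of the plane, `U` says in which direction it turns. -/
structure TripleChain (U : ι → ι → ι → Prop) (X : Finset ι) (k : ℕ) (c : ℕ → ι) : Prop where
  mem : ∀ i ≤ k, c i ∈ X
  lt : ∀ i < k, c i < c (i + 1)
  triple : ∀ i, i + 1 < k → U (c i) (c (i + 1)) (c (i + 2))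

theorem TripleChain.mono (h : TripleChain U X k c) (hXY : X ⊆ Y) : TripleChain U Y k c :=
  ⟨fun i hi ↦ hXY (h.mem i hi), h.lt, h.triple⟩

theorem exists_tripleChain_of_le_one (hk : k ≤ 1) (hX : 2 ^ k ≤ #X) :
    ∃ c, TripleChain U X k c := by
  rcases Nat.le_one_iff_eq_zero_or_eq_one.1 hk with rfl | rfl
  · obtain ⟨x, hx⟩ := Finset.card_pos.1 hX
    exact ⟨fun _ ↦ x, fun _ _ ↦ hx, by simp, by simp⟩
  · obtain ⟨x, hx, y, hy, hxy⟩ := Finset.one_lt_card.1 hX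
    wlog h : x < y generalizing x y
    · exact this y hy x hx hxy.symm (hxy.lt_or_gt.resolve_left h)
    exact ⟨fun i ↦ if i = 0 then x else y, by grind, by grind, by simp⟩

theorem TripleChain.append (h : TripleChain U X (k + 1) c) {z : ι} (hz : z ∈ X)
    (hlt : c (k + 1) < z) (hU : U (c k) (c (k + 1)) z) :
    TripleChain U X (k + 2) fun i ↦ if i ≤ k + 1 then c i else z where
  mem := by grind [h.mem]
  lt i hi := by
    rcases (Nat.le_of_lt_succ hi).lt_or_eq with hik | rfl
    · grind [h.lt i hik]
    · simpa using hlt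
  triple i hi := by
    rcases (Nat.le_of_lt_succ (Nat.lt_of_succ_lt_succ hi)).lt_or_eq with hik | rfl
    · simpa [hik.le, Nat.succ_le_of_lt hik, hik.le.trans k.le_succ] using
        h.triple i (Nat.succ_lt_succ hik)
    · simpa using hU

theorem TripleChain.prepend (h : TripleChain U X (k + 1) c) {z : ι} (hz : z ∈ X)
    (hlt : z < c 0) (hU : U z (c 0) (c 1)) :
    TripleChain U X (k + 2) fun i ↦ Nat.casesOn i z c where
  mem
    | 0, _ => hz
    | i + 1, hi => h.mem i (Nat.le_of_succ_le_succ hi)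
  lt
    | 0, _ => hlt
    | i + 1, hi => h.lt i (Nat.lt_of_succ_lt_succ hi)
  triple
    | 0, _ => hU
    | i + 1, hi => h.triple i (Nat.lt_of_succ_lt_succ hi)

/-- The middle triple of the concatenation satisfies `U` or `D`, and accordingly the second point of
the `D`-chain prolongs the `U`-chain or the last but one of the `U`-chain prolongs the `D`-chain. -/
theorem TripleChain.exists_extension (hUD : ∀ x y z, U x y z ∨ D x y z)
    (hc : TripleChain U X (k + 1) c) (hc' : TripleChain D X (l + 1) c') (hcc' : c (k + 1) = c' 0) :
    (∃ e, TripleChain U X (k + 2) e) ∨ ∃ e, TripleChain D X (l + 2) e := by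
  rcases hUD (c k) (c (k + 1)) (c' 1) with h | h
  · exact .inl ⟨_, hc.append (hc'.mem 1 (by omega)) (hcc' ▸ hc'.lt 0 (by omega)) h⟩
  · rw [hcc'] at h
    exact .inr ⟨_, hc'.prepend (hc.mem k (by omega)) (hcc' ▸ hc.lt k (by omega)) h⟩

/-- Erdős–Szekeres: let `L` be the set of endpoints of `U`-chains with `k + 1` steps. If `L` is
large, it contains a chain as required or a `D`-chain whose first point ends a `U`-chain, and if
its complement is large, that contains no `U`-chain with `k + 1` steps. -/
theorem exists_tripleChain_or (hUD : ∀ x y z, U x y z ∨ D x y z) :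
    ∀ (k l : ℕ) (X : Finset ι), 2 ^ (k + l) ≤ #X →
      (∃ c, TripleChain U X k c) ∨ ∃ c, TripleChain D X l c
  | 0, _, _, hX | 1, _, _, hX => .inl <| exists_tripleChain_of_le_one (by simp)
      ((Nat.pow_le_pow_right two_pos (Nat.le_add_right _ _)).trans hX)
  | _, 0, _, hX | _, 1, _, hX => .inr <| exists_tripleChain_of_le_one (by simp)
      ((Nat.pow_le_pow_right two_pos (Nat.le_add_left _ _)).trans hX)
  | k + 2, l + 2, X, hX => by
    classical
    set L := {x ∈ X | ∃ c, TripleChain U X (k + 1) c ∧ c (k + 1) = x}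
    have hLX : L ⊆ X := Finset.filter_subset _ X
    have hcard : #(X \ L) + #L = #X := Finset.card_sdiff_add_card_eq_card hLX
    have hpow : 2 ^ (k + 2 + (l + 2)) = 2 ^ (k + 2 + (l + 1)) + 2 ^ (k + 1 + (l + 2)) := by ring
    rcases le_or_gt (2 ^ (k + 2 + (l + 1))) #L with hlarge | hsmall
    · rcases exists_tripleChain_or hUD (k + 2) (l + 1) L hlarge with ⟨c, hc⟩ | ⟨c', hc'⟩
      · exact .inl ⟨c, hc.mono hLX⟩
      · obtain ⟨-, c, hc, hcc'⟩ := Finset.mem_filter.1 (hc'.mem 0 (Nat.zero_le _))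
        exact hc.exists_extension hUD (hc'.mono hLX) hcc'
    · rcases exists_tripleChain_or hUD (k + 1) (l + 2) (X \ L) (by omega) with ⟨c, hc⟩ | ⟨c, hc⟩
      · have hmem := Finset.mem_sdiff.1 (hc.mem (k + 1) le_rfl)
        exact (hmem.2 (Finset.mem_filter.2
          ⟨hmem.1, c, hc.mono Finset.sdiff_subset, rfl⟩)).elim
      · exact .inr ⟨c, hc.mono Finset.sdiff_subset⟩

end CupsAndCaps

section ChainCover

variable {S X : Finset ℂ} {k : ℕ}

theorem TripleChain.injOn {ι : Type*} [LinearOrder ι] {U : ι → ι → ι → Prop} {X : Finset ι}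
    {c : ℕ → ι} (h : TripleChain U X k c) : InjOn c (Iic k) :=
  (strictMonoOn_of_lt_add_one ordConnected_Iic fun i _ _ hi ↦ h.lt i hi).injOn

theorem exists_forall_le_or_forall_ge {α : Type*} [LinearOrder α] {f : ℕ → α}
    (hf : MonotoneOn f (Iio (2 * k)) ∨ AntitoneOn f (Iio (2 * k))) (t : α) :
    ∃ o ≤ k, (∀ i < k, f (o + i) ≤ t) ∨ ∀ i < k, t ≤ f (o + i) := by
  rcases k.eq_zero_or_pos with rfl | hk
  · exact ⟨0, le_rfl, .inl (by simp)⟩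
  rcases hf with hf | hf <;> rcases le_total (f k) t with ht | ht
  · exact ⟨0, k.zero_le, .inl fun i hi ↦ (hf (by grind) (by grind) (by omega)).trans ht⟩
  · exact ⟨k, le_rfl, .inr fun i hi ↦ ht.trans (hf (by grind) (by grind) (by omega))⟩
  · exact ⟨k, le_rfl, .inl fun i hi ↦ (hf (by grind) (by grind) (by omega)).trans ht⟩
  · exact ⟨0, k.zero_le, .inr fun i hi ↦ ht.trans (hf (by grind) (by grind) (by omega))⟩

theorem exists_slopeChain_of_tripleChain {U : ℂ → ℂ → ℂ → Prop} [LinearOrder ℂ] {c : ℕ → ℂ}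
    (hre : ∀ x y : ℂ, x < y → x.re ≤ y.re) (hc : TripleChain U X (2 * k) c)
    (hmono : MonotoneOn (stepArg c) (Iio (2 * k)) ∨ AntitoneOn (stepArg c) (Iio (2 * k))) :
    ∃ a : ℕ → ℂ, (∀ i ≤ k, a i ∈ X) ∧ InjOn a (Iic k) ∧ SlopeChain k a := by
  have harg : ∀ i < 2 * k, stepArg c i ∈ Icc (-(π / 2)) (π / 2) := fun i hi ↦
    abs_le.1 <| Complex.abs_arg_le_pi_div_two_iff.2 <| by
      simpa using hre _ _ (hc.lt i hi)
  obtain ⟨o, ho, hsign⟩ := exists_forall_le_or_forall_ge hmono 0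
  refine ⟨fun i ↦ c (o + i), fun i hi ↦ hc.mem _ (by omega), fun i hi j hj hij ↦ ?_, ?_⟩
  · exact Nat.add_left_cancel (hc.injOn (by grind) (by grind) hij)
  have hmaps : MapsTo (o + ·) (Iio k) (Iio (2 * k)) := by
    intro i hi
    grind
  have hmono' : MonotoneOn (stepArg fun i ↦ c (o + i)) (Iio k) ∨
      AntitoneOn (stepArg fun i ↦ c (o + i)) (Iio k) :=
    hmono.imp (fun h i hi j hj hij ↦ h (hmaps hi) (hmaps hj) (Nat.add_le_add_left hij o))
      fun h i hi j hj hij ↦ h (hmaps hi) (hmaps hj) (Nat.add_le_add_left hij o)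
  refine hsign.imp (fun h ↦ ⟨fun i hi ↦ ⟨(harg _ (hmaps hi)).1, ?_⟩, hmono'⟩)
    fun h ↦ ⟨fun i hi ↦ ⟨h i hi, ?_⟩, hmono'⟩
  · exact (h i hi).trans_eq (neg_add_cancel _).symm
  · exact (harg _ (hmaps hi)).2.trans_eq (zero_add _).symm

theorem exists_slopeChain (hX : 2 ^ (4 * k) ≤ #X) :
    ∃ a : ℕ → ℂ, (∀ i ≤ k, a i ∈ X) ∧ InjOn a (Iic k) ∧ SlopeChain k a := by
  let lexOrder : LinearOrder ℂ := LinearOrder.lift' (fun z : ℂ ↦ toLex (z.re, z.im))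
    fun z w h ↦ by simpa [Complex.ext_iff] using h
  have hre : ∀ x y : ℂ, x < y → x.re ≤ y.re := fun x y h ↦
    ((Prod.Lex.toLex_lt_toLex (x := (x.re, x.im))).1 h).elim le_of_lt fun h ↦ h.1.le
  rcases exists_tripleChain_or (X := X) (U := fun x y z ↦ (y - x).arg ≤ (z - y).arg)
    (D := fun x y z ↦ (z - y).arg ≤ (y - x).arg) (fun _ _ _ ↦ le_total _ _) (2 * k) (2 * k)
    (hX.trans' (by grind)) with ⟨c, hc⟩ | ⟨c, hc⟩
  · exact exists_slopeChain_of_tripleChain hre hc <| .inl <|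
      monotoneOn_of_le_add_one ordConnected_Iio fun i _ _ hi ↦ hc.triple i hi
  · exact exists_slopeChain_of_tripleChain hre hc <| .inr <|
      antitoneOn_of_add_one_le ordConnected_Iio fun i _ _ hi ↦ hc.triple i hi

theorem slopeChain_const (k : ℕ) (x : ℂ) : SlopeChain k fun _ ↦ x :=
  .inr ⟨fun i _ ↦ by simp [stepArg, pi_div_two_pos.le], .inl (by simp [stepArg, MonotoneOn])⟩

theorem exists_slopeChain_cover (hk : 0 < k) (S : Finset ℂ) :
    ∃ C : Finset (ℕ → ℂ), k * #C ≤ #S + k * 2 ^ (4 * k) ∧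
      (∀ a ∈ C, (∀ i ≤ k, a i ∈ S) ∧ SlopeChain k a) ∧ ∀ x ∈ S, ∃ a ∈ C, ∃ i < k, a i = x := by
  classical
  induction S using Finset.strongInduction with | H S ih
  rcases lt_or_ge #S (2 ^ (4 * k)) with hsmall | hlarge
  · refine ⟨S.image fun x _ ↦ x, ?_, ?_, fun x hx ↦ ⟨_, Finset.mem_image_of_mem _ hx, 0, hk, rfl⟩⟩
    · exact (Nat.mul_le_mul_left k (Finset.card_image_le.trans hsmall.le)).trans
        (Nat.le_add_left _ _)
    · rintro a ha
      obtain ⟨x, hx, rfl⟩ := Finset.mem_image.1 ha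
      exact ⟨fun _ _ ↦ hx, slopeChain_const k x⟩
  · obtain ⟨a, haS, hinj, ha⟩ := exists_slopeChain hlarge
    set A := (Finset.range k).image a
    have hAS : A ⊆ S := Finset.image_subset_iff.2 fun i hi ↦ haS i (Finset.mem_range.1 hi).le
    have hA : #A = k := by
      rw [Finset.card_image_of_injOn (hinj.mono fun i hi ↦ (by simpa using hi : i < k).le),
        Finset.card_range]
    have hcard : #(S \ A) + k = #S := hA ▸ Finset.card_sdiff_add_card_eq_card hAS
    obtain ⟨C, hC, hCS, hcover⟩ := ih (S \ A)
      (Finset.sdiff_ssubset hAS (Finset.card_pos.1 (hA ▸ hk)))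
    refine ⟨insert a C, ?_, ?_, fun x hx ↦ ?_⟩
    · linarith [Nat.mul_le_mul_left k (Finset.card_insert_le a C)]
    · simp only [Finset.forall_mem_insert]
      exact ⟨⟨haS, ha⟩, fun b hb ↦
        ⟨fun i hi ↦ Finset.sdiff_subset ((hCS b hb).1 i hi), (hCS b hb).2⟩⟩
    · by_cases hxA : x ∈ A
      · obtain ⟨i, hi, rfl⟩ := Finset.mem_image.1 hxA
        exact ⟨a, Finset.mem_insert_self a C, i, Finset.mem_range.1 hi, rfl⟩
      · obtain ⟨b, hb, i, hi, rfl⟩ := hcover x (Finset.mem_sdiff.2 ⟨hx, hxA⟩)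
        exact ⟨b, Finset.mem_insert_of_mem hb, i, hi, rfl⟩

end ChainCover

section Graph

variable {S : Finset ℂ}

theorem exists_graph_of_slopeChain_cover {d : ℕ} {C : Finset (ℕ → ℂ)}
    (hCS : ∀ a ∈ C, ∀ i ≤ 2 ^ d, a i ∈ S) (hC : ∀ a ∈ C, SlopeChain (2 ^ d) a)
    (hcover : ∀ x ∈ S, ∃ a ∈ C, ∃ i < 2 ^ d, a i = x) :
    ∃ T ⊆ S ×ˢ S, #T ≤ 5 * #C ^ 2 * 2 ^ d * (d + 1) ∧ ∀ x ∈ S, ∀ y ∈ S, Joined T x y := by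
  classical
  set W := C.biUnion fun a ↦ (Finset.range (2 ^ d)).image fun i ↦ (a i, a (i + 1))
  have hWS : W ⊆ S ×ˢ S := Finset.biUnion_subset.2 fun a ha ↦ Finset.image_subset_iff.2
    fun i hi ↦ Finset.mk_mem_product (hCS a ha i (Finset.mem_range_le hi))
      (hCS a ha (i + 1) (Finset.mem_range.1 hi))
  have hWcard : #W ≤ #C * 2 ^ d :=
    Finset.card_biUnion_le_card_mul _ _ _ fun a _ ↦ Finset.card_image_le.trans (by simp)
  have hwalk : ∀ a ∈ C, IsWalk W S (2 ^ d) a := fun a ha i hi ↦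
    ⟨hCS a ha i hi.le, Finset.mem_biUnion.2
      ⟨a, ha, Finset.mem_image_of_mem _ (Finset.mem_range.2 hi)⟩⟩
  obtain ⟨T, hTS, hTcard, hT⟩ := Servable.biUnion (I := C ×ˢ C)
    (P := fun c ↦ (c.1 '' Iio (2 ^ d)) ×ˢ (c.2 '' Iio (2 ^ d))) fun c hc ↦
      have ⟨h₁, h₂⟩ := Finset.mem_product.1 hc
      (hC _ h₁).servable (hC _ h₂) (hwalk _ h₁) (hwalk _ h₂)
  refine ⟨W ∪ T, Finset.union_subset hWS hTS, ?_, fun x hx y hy ↦ ?_⟩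
  · rw [Finset.card_product] at hTcard
    calc #(W ∪ T) ≤ #W + #T := Finset.card_union_le W T
      _ ≤ #C * 2 ^ d + #C * #C * (4 * 2 ^ d * (d + 1)) := add_le_add hWcard hTcard
      _ ≤ #C ^ 2 * 2 ^ d * (d + 1) + #C * #C * (4 * 2 ^ d * (d + 1)) := by
        refine Nat.add_le_add_right ?_ _
        exact (Nat.mul_le_mul_right _ (Nat.le_self_pow two_ne_zero _)).trans
          (Nat.le_mul_of_pos_right _ d.succ_pos)
      _ = 5 * #C ^ 2 * 2 ^ d * (d + 1) := by ring
  · obtain ⟨a, ha, i, hi, rfl⟩ := hcover x hx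
    obtain ⟨b, hb, j, hj, rfl⟩ := hcover y hy
    rw [Finset.coe_union]
    exact hT (a i, b j) (mem_iUnion₂.2
      ⟨(a, b), Finset.mk_mem_product ha hb, mem_image_of_mem a hi, mem_image_of_mem b hj⟩)

theorem exists_graph {d : ℕ} (hd : 2 ^ d * 2 ^ (4 * 2 ^ d) ≤ #S) :
    ∃ T ⊆ S ×ˢ S, 2 ^ d * #T ≤ 20 * #S ^ 2 * (d + 1) ∧ ∀ x ∈ S, ∀ y ∈ S, Joined T x y := by
  obtain ⟨C, hCcard, hC, hcover⟩ := exists_slopeChain_cover (Nat.two_pow_pos d) S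
  obtain ⟨T, hTS, hTcard, hT⟩ := exists_graph_of_slopeChain_cover (fun a ha ↦ (hC a ha).1)
    (fun a ha ↦ (hC a ha).2) hcover
  have hCS : 2 ^ d * #C ≤ 2 * #S := by linarith
  refine ⟨T, hTS, ?_, hT⟩
  calc 2 ^ d * #T ≤ 2 ^ d * (5 * #C ^ 2 * 2 ^ d * (d + 1)) := Nat.mul_le_mul_left _ hTcard
    _ = 5 * (2 ^ d * #C) ^ 2 * (d + 1) := by ring
    _ ≤ 5 * (2 * #S) ^ 2 * (d + 1) := by gcongr
    _ = 20 * #S ^ 2 * (d + 1) := by ring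

theorem exists_two_pow_le_and_le_two_pow {n : ℕ} (hn : 32 ≤ n) :
    ∃ d, 2 ^ (5 * 2 ^ d) ≤ n ∧ n + 4 ≤ 2 ^ (11 * 2 ^ d) := by
  set K := Nat.log 2 n
  have hK : 5 ≤ K := Nat.le_log_of_pow_le one_lt_two hn
  set d := Nat.log 2 (K / 5)
  have hd : 2 ^ d ≤ K / 5 := Nat.pow_log_le_self 2 (by omega)
  have hd' : K / 5 < 2 ^ (d + 1) := Nat.lt_pow_succ_log_self one_lt_two _
  have hn' : n < 2 ^ (K + 1) := Nat.lt_pow_succ_log_self one_lt_two n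
  refine ⟨d, (Nat.pow_le_pow_right two_pos (by omega)).trans (Nat.pow_log_le_self 2 (by omega)), ?_⟩
  calc n + 4 ≤ 2 ^ (K + 2) := by grind
    _ ≤ 2 ^ (11 * 2 ^ d) := Nat.pow_le_pow_right two_pos (by grind)

theorem log_le_sixteen_mul_log_log {x : ℝ} (hx : 4 ≤ x) (hx' : x ≤ 64) :
    log x ≤ 16 * log (log x) := by
  have h₁ : 2 * log 2 ≤ log x := by
    rw [← log_rpow two_pos]
    exact log_le_log (by norm_num) (by norm_num; exact hx)
  have h₂ : log x ≤ 6 * log 2 := by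
    rw [← log_rpow two_pos]
    exact log_le_log (by linarith) (by norm_num; exact hx')
  have hlog_two := log_two_gt_d9
  have hlog_two' := log_two_lt_d9
  have hloglog : 1 - (log x)⁻¹ ≤ log (log x) := one_sub_inv_le_log_of_pos (by linarith)
  have hinv : (log x)⁻¹ ≤ 0.73 := inv_le_of_inv_le₀ (by norm_num) (by norm_num; linarith)
  linarith

theorem add_one_le_three_mul_log_log {d : ℕ} {x : ℝ} (hx : 2 ^ (5 * 2 ^ d) ≤ x) :
    d + 1 ≤ 3 * log (log x) := by
  have hlog_two := log_two_gt_d9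
  have hlog : 5 * 2 ^ d * log 2 ≤ log x := by
    have := log_le_log (by positivity) hx
    rwa [log_pow, Nat.cast_mul, Nat.cast_pow, Nat.cast_ofNat, Nat.cast_ofNat] at this
  have hexp : exp 1 * 2 ^ d ≤ log x := by
    nlinarith [exp_one_lt_d9, pow_pos (two_pos (α := ℝ)) d]
  have hloglog := log_le_log (by positivity) hexp
  rw [log_mul (exp_ne_zero 1) (by positivity), log_exp, log_pow] at hloglog
  nlinarith [(Nat.cast_nonneg d : (0 : ℝ) ≤ d)]

theorem exists_graph_card_le (S : Finset ℂ) :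
    ∃ T ⊆ S ×ˢ S, (#T : ℝ) ≤ 480 * (#S : ℝ) ^ 2 * log (log (#S + 4)) / log (#S + 4) ∧
      ∀ x ∈ S, ∀ y ∈ S, Joined T x y := by
  have hlog : 0 < log ((#S : ℝ) + 4) := log_pos (by linarith [(#S).cast_nonneg (α := ℝ)])
  rcases lt_or_ge #S 32 with hsmall | hlarge
  · refine ⟨S ×ˢ S, subset_rfl, ?_, fun x hx y hy ↦
      joined_of_edge (Finset.mem_coe.2 (Finset.mk_mem_product hx hy))⟩
    have hloglog : log ((#S : ℝ) + 4) ≤ 16 * log (log (#S + 4)) :=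
      log_le_sixteen_mul_log_log (by simp) (by norm_cast; omega)
    rw [le_div_iff₀ hlog, Finset.card_product, Nat.cast_mul, ← sq]
    nlinarith [sq_nonneg (#S : ℝ)]
  · obtain ⟨d, hdS, hSd⟩ := exists_two_pow_le_and_le_two_pow hlarge
    have hd : 2 ^ d * 2 ^ (4 * 2 ^ d) ≤ #S := by
      rw [← pow_add]
      exact (Nat.pow_le_pow_right two_pos (by grind [d.lt_two_pow_self])).trans hdS
    obtain ⟨T, hTS, hTcard, hT⟩ := exists_graph hd
    have hTcard' : 2 ^ d * (#T : ℝ) ≤ 20 * (#S : ℝ) ^ 2 * (d + 1) := mod_cast hTcard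
    have hlog_le : log ((#S : ℝ) + 4) ≤ 8 * 2 ^ d := by
      calc log ((#S : ℝ) + 4) ≤ log (2 ^ (11 * 2 ^ d)) :=
            log_le_log (by positivity) (mod_cast hSd)
        _ = 11 * 2 ^ d * log 2 := by simp [log_pow]
        _ ≤ 8 * 2 ^ d := by nlinarith [log_two_lt_d9, pow_pos (two_pos (α := ℝ)) d]
    have hd_le : (d : ℝ) + 1 ≤ 3 * log (log (#S + 4)) :=
      add_one_le_three_mul_log_log (mod_cast hdS.trans (Nat.le_add_right _ 4))
    refine ⟨T, hTS, ?_, hT⟩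
    rw [le_div_iff₀ hlog]
    calc (#T : ℝ) * log (#S + 4) ≤ #T * (8 * 2 ^ d) := by gcongr
      _ = 8 * (2 ^ d * #T) := by ring
      _ ≤ 8 * (20 * (#S : ℝ) ^ 2 * (3 * log (log (#S + 4)))) := by grw [hTcard', hd_le]
      _ = 480 * (#S : ℝ) ^ 2 * log (log (#S + 4)) := by ring

end Graph

section Spanner

theorem exists_seq_of_reflTransGen {ι : Type*} {r : ι → ι → Prop} {x y : ι}
    (h : ReflTransGen r x y) :
    ∃ (m : ℕ) (p : ℕ → ι), p 0 = x ∧ p m = y ∧ ∀ l < m, r (p l) (p (l + 1)) := by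
  induction h using ReflTransGen.head_induction_on with
  | refl => exact ⟨0, fun _ ↦ y, rfl, rfl, by simp⟩
  | @head x z hxz _ ih =>
    obtain ⟨m, p, hp, hpm, hr⟩ := ih
    refine ⟨m + 1, fun l ↦ Nat.casesOn l x p, rfl, hpm, fun l hl ↦ ?_⟩
    cases l with
    | zero => simpa [hp] using hxz
    | succ l => exact hr l (Nat.lt_of_succ_lt_succ hl)

theorem sum_norm_sub_mul_le_norm_sub {V : Type*} [NormedAddCommGroup V] [InnerProductSpace ℝ V]
    {p : ℕ → V} {m : ℕ} {d : V} {c : ℝ} (hd : ‖d‖ = 1)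
    (h : ∀ l < m, ‖p (l + 1) - p l‖ * c ≤ inner ℝ (p (l + 1) - p l) d) :
    (∑ l ∈ Finset.range m, ‖p (l + 1) - p l‖) * c ≤ ‖p m - p 0‖ := by
  calc (∑ l ∈ Finset.range m, ‖p (l + 1) - p l‖) * c
      ≤ ∑ l ∈ Finset.range m, inner ℝ (p (l + 1) - p l) d := by
        rw [Finset.sum_mul]
        exact Finset.sum_le_sum fun l hl ↦ h l (Finset.mem_range.1 hl)
    _ = inner ℝ (p m - p 0) d := by rw [← sum_inner, Finset.sum_range_sub]
    _ ≤ ‖p m - p 0‖ := by simpa [hd] using real_inner_le_norm (p m - p 0) d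

theorem dot2_eq_inner (u v : ℂ) : dot2 u v = inner ℝ u v := by
  simp [dot2, Complex.inner, mul_comm]

theorem Joined.exists_spanning_seq (h : Joined E x y) :
    ∃ (m : ℕ) (p : ℕ → ℂ), p 0 = x ∧ p m = y ∧
      (∀ l < m, (p l, p (l + 1)) ∈ E ∨ (p (l + 1), p l) ∈ E) ∧
      (∃ d : ℂ, ‖d‖ = 1 ∧ ∀ l < m,
        ‖p (l + 1) - p l‖ * cos (π / 4) ≤ dot2 (p (l + 1) - p l) d) ∧
      ∑ l ∈ Finset.range m, ‖p (l + 1) - p l‖ ≤ √2 * ‖y - x‖ := by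
  obtain ⟨α, hα⟩ := h
  obtain ⟨m, p, rfl, rfl, hp⟩ := exists_seq_of_reflTransGen hα
  set d := Complex.exp ((α + π / 4 : ℝ) * Complex.I)
  have hd : ‖d‖ = 1 := Complex.norm_exp_ofReal_mul_I _
  have hstep : ∀ l < m, ‖p (l + 1) - p l‖ * cos (π / 4) ≤ dot2 (p (l + 1) - p l) d :=
    fun l hl ↦ norm_mul_cos_pi_div_four_le_dot2 (hp l hl).2
  refine ⟨m, p, rfl, rfl, fun l hl ↦ (hp l hl).1, ⟨d, hd, hstep⟩, ?_⟩
  have hsum := sum_norm_sub_mul_le_norm_sub hd fun l hl ↦ (hstep l hl).trans_eq (dot2_eq_inner _ _)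
  rw [cos_pi_div_four] at hsum
  have hsqrt : √2 * √2 = 2 := mul_self_sqrt zero_le_two
  linear_combination √2 * hsum - (∑ l ∈ Finset.range m, ‖p (l + 1) - p l‖) / 2 * hsqrt

end Spanner

end AngleMonotone

theorem subquadratic_angle_monotone_graph_general :
    ∃ Cst : ℝ, 0 < Cst ∧ ∀ S : Finset ℂ,
      ∃ T : Finset (ℂ × ℂ),
        (∀ e ∈ T, e.1 ∈ S ∧ e.2 ∈ S) ∧
        (T.card : ℝ) ≤
          Cst * (S.card : ℝ) ^ 2 * Real.log (Real.log (S.card + 4)) / Real.log (S.card + 4) ∧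
        ∀ s ∈ S, ∀ t ∈ S, ∃ (m : ℕ) (p : ℕ → ℂ), p 0 = s ∧ p m = t ∧
          (∀ l < m, (p l, p (l + 1)) ∈ T ∨ (p (l + 1), p l) ∈ T) ∧
          (∃ d : ℂ, ‖d‖ = 1 ∧ ∀ l < m,
            ‖p (l + 1) - p l‖ * Real.cos (π / 4) ≤ dot2 (p (l + 1) - p l) d) ∧
          ∑ l ∈ Finset.range m, ‖p (l + 1) - p l‖ ≤ Real.sqrt 2 * ‖t - s‖ := by
  refine ⟨480, by norm_num, fun S ↦ ?_⟩
  obtain ⟨T, hTS, hTcard, hT⟩ := AngleMonotone.exists_graph_card_le S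
  exact ⟨T, fun e he ↦ Finset.mem_product.1 (hTS he), hTcard,
    fun s hs t ht ↦ (hT s hs t ht).exists_spanning_seq⟩

/-- Every finite set `S` of `n ≥ 2` points in general position admits a
geometric graph with `O(n² log log n / log n)` edges in which every pair of points is
joined by a path whose edge vectors all lie in a common closed `90°` wedge (an
angle-monotone graph of width `90°`); such a path has length at most `√2` times the
distance between its endpoints, so the graph is a `√2`-spanner. -/
theorem subquadratic_angle_monotone_graph :
    ∃ Cst : ℝ, 0 < Cst ∧ ∀ S : Finset ℂ, 2 ≤ S.card → GenPos S →
      ∃ T : Finset (ℂ × ℂ),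
        (∀ e ∈ T, e.1 ∈ S ∧ e.2 ∈ S) ∧
        (T.card : ℝ) ≤
          Cst * (S.card : ℝ) ^ 2 * Real.log (Real.log (S.card + 4)) / Real.log (S.card + 4) ∧
        ∀ s ∈ S, ∀ t ∈ S, ∃ (m : ℕ) (p : ℕ → ℂ), p 0 = s ∧ p m = t ∧
          (∀ l < m, (p l, p (l + 1)) ∈ T ∨ (p (l + 1), p l) ∈ T) ∧
          (∃ d : ℂ, ‖d‖ = 1 ∧ ∀ l < m,
            ‖p (l + 1) - p l‖ * Real.cos (π / 4) ≤ dot2 (p (l + 1) - p l) d) ∧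
          ∑ l ∈ Finset.range m, ‖p (l + 1) - p l‖ ≤ Real.sqrt 2 * ‖t - s‖ := by
  obtain ⟨C, hC, h⟩ := subquadratic_angle_monotone_graph_general
  exact ⟨C, hC, fun S _ _ ↦ h S⟩
end
end

section
/- In a 3-sweep graph with wedge angles θ_a, θ_b, θ_c, if v lies on the a-path P_{q,a} of a point q, then every edge vector along the subpath from q to v lies in the closed wedge of angle θ_a (the translate of the wedge W_{·,a}); hence the path from q to v is angle-monotone of width θ_a and its length is at most (1/cos(θ_a/2)) · ‖v − q‖. -/
/-!
Let `d` be the unit bisector of two directions `X` and `Y` at angle `θ < π`. The vectors `w` with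
`‖w‖ cos (θ / 2) ≤ ⟪w, d⟫` form a convex cone containing `X` and `Y`, hence the whole wedge between
them. Summing this inequality over the edges of a path makes the right-hand sides telescope to
`⟪v m - v 0, d⟫ ≤ ‖v m - v 0‖`.
-/

open Real

noncomputable section

/-- Counterclockwise rotation of a plane vector by `90°`. -/
def perp2 (u : ℂ) : ℂ := Complex.I * u

/-- Membership in the closed wedge with apex `q` spanned by the directions `X` and `Y`. -/
def InWedge (X Y q p : ℂ) : Prop :=
  ∃ s u : ℝ, 0 ≤ s ∧ 0 ≤ u ∧ p - q = s • X + u • Y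

/-- `p` is a sweep-nearest neighbor of `q` in the wedge spanned by `X` and `Y`. -/
def IsSweepNbr (X Y : ℂ) (S : Finset ℂ) (q p : ℂ) : Prop :=
  p ∈ S ∧ p ≠ q ∧ InWedge X Y q p ∧
    ∀ r ∈ S, r ≠ q → InWedge X Y q r →
      |dot2 (perp2 (X - Y)) (p - q)| ≤ |dot2 (perp2 (X - Y)) (r - q)|

open InnerProductGeometry NormedSpace
open scoped NNReal RealInnerProductSpace

section AngleMonotone

variable {E : Type*} [NormedAddCommGroup E] [InnerProductSpace ℝ E]

/-- The polygonal path `v 0, …, v m` is angle-monotone of width `θ`: its edge vectors make an angle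
at most `θ / 2` with a common direction `d`. The condition is written with inner products so that
zero edges, whose angle with `d` is `π / 2` by convention, are allowed. -/
def IsAngleMonotone (v : ℕ → E) (m : ℕ) (θ : ℝ) : Prop :=
  ∃ d : E, ‖d‖ = 1 ∧ ∀ l < m, ‖v (l + 1) - v l‖ * cos (θ / 2) ≤ ⟪v (l + 1) - v l, d⟫

theorem IsAngleMonotone.sum_norm_le {v : ℕ → E} {m : ℕ} {θ : ℝ}
    (hv : IsAngleMonotone v m θ) (hθ : 0 < cos (θ / 2)) :
    ∑ l ∈ Finset.range m, ‖v (l + 1) - v l‖ ≤ 1 / cos (θ / 2) * ‖v m - v 0‖ := by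
  obtain ⟨d, hd, hedge⟩ := hv
  rw [one_div_mul_eq_div, le_div_iff₀ hθ, Finset.sum_mul]
  calc ∑ l ∈ Finset.range m, ‖v (l + 1) - v l‖ * cos (θ / 2)
      ≤ ∑ l ∈ Finset.range m, ⟪v (l + 1) - v l, d⟫ :=
        Finset.sum_le_sum fun l hl => hedge l (Finset.mem_range.1 hl)
    _ = ⟪v m - v 0, d⟫ := by rw [← sum_inner, Finset.sum_range_sub]
    _ ≤ ‖v m - v 0‖ * ‖d‖ := real_inner_le_norm _ _
    _ = ‖v m - v 0‖ := by rw [hd, mul_one]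

theorem angle_add_right_of_norm_eq {x y : E} (hy : y ≠ 0) (h : ‖x‖ = ‖y‖) :
    angle x (x + y) = angle x y / 2 := by
  have hsum := angle_eq_angle_add_add_angle_add x hy
  have hbase : angle x (x + y) = angle y (x + y) := by
    have := angle_sub_eq_angle_sub_rev_of_norm_eq (x := x) (y := -y) (by rwa [norm_neg])
    rwa [sub_neg_eq_add, ← neg_add', angle_neg_neg, add_comm y x] at this
  linarith

theorem exists_unit_bisector {X Y : E} (hX : X ≠ 0) (hY : Y ≠ 0) (hXY : angle X Y ≠ π) :
    ∃ d : E, ‖d‖ = 1 ∧ angle X d = angle X Y / 2 ∧ angle Y d = angle X Y / 2 := by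
  have hx : ‖normalize X‖ = 1 := norm_normalize hX
  have hy : ‖normalize Y‖ = 1 := norm_normalize hY
  have hx₀ : normalize X ≠ 0 := (normalize_eq_zero_iff X).not.2 hX
  have hy₀ : normalize Y ≠ 0 := (normalize_eq_zero_iff Y).not.2 hY
  have hsum : normalize X + normalize Y ≠ 0 := by
    intro h
    apply hXY
    rw [← angle_normalize_left, ← angle_normalize_right, eq_neg_of_add_eq_zero_left h,
      angle_neg_self_of_nonzero hy₀]
  refine ⟨normalize (normalize X + normalize Y), norm_normalize hsum, ?_, ?_⟩
  · simpa only [angle_normalize_left, angle_normalize_right] using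
      angle_add_right_of_norm_eq hy₀ (hx.trans hy.symm)
  · simpa only [angle_normalize_left, angle_normalize_right, add_comm, angle_comm Y X] using
      angle_add_right_of_norm_eq hx₀ (hy.trans hx.symm)

theorem norm_mul_le_inner_of_mem_span {s : Set E} {d : E} {c : ℝ} (hc : 0 ≤ c)
    (hs : ∀ x ∈ s, ‖x‖ * c ≤ ⟪x, d⟫) {w : E} (hw : w ∈ Submodule.span ℝ≥0 s) :
    ‖w‖ * c ≤ ⟪w, d⟫ := by
  induction hw using Submodule.span_induction with
  | mem x hx => exact hs x hx
  | zero => simp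
  | add x y _ _ hx hy =>
    calc ‖x + y‖ * c ≤ (‖x‖ + ‖y‖) * c := by gcongr; exact norm_add_le x y
      _ = ‖x‖ * c + ‖y‖ * c := add_mul _ _ _
      _ ≤ ⟪x, d⟫ + ⟪y, d⟫ := add_le_add hx hy
      _ = ⟪x + y, d⟫ := (inner_add_left x y d).symm
  | smul r x _ hx =>
    calc ‖r • x‖ * c = r * (‖x‖ * c) := by
          rw [NNReal.smul_def, norm_smul, norm_of_nonneg r.coe_nonneg, mul_assoc]
      _ ≤ r * ⟪x, d⟫ := by gcongr
      _ = ⟪r • x, d⟫ := by rw [NNReal.smul_def, real_inner_smul_left]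

theorem cos_half_angle_pos {X Y : E} (hXY : angle X Y ≠ π) : 0 < cos (angle X Y / 2) := by
  have hlt : angle X Y < π := (angle_le_pi X Y).lt_of_ne hXY
  exact cos_pos_of_mem_Ioo ⟨by linarith [angle_nonneg X Y, pi_pos], by linarith⟩

theorem isAngleMonotone_of_mem_span {X Y : E} (hX : X ≠ 0) (hY : Y ≠ 0) (hXY : angle X Y ≠ π)
    {v : ℕ → E} {m : ℕ} (hv : ∀ l < m, v (l + 1) - v l ∈ Submodule.span ℝ≥0 {X, Y}) :
    IsAngleMonotone v m (angle X Y) := by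
  obtain ⟨d, hd, hXd, hYd⟩ := exists_unit_bisector hX hY hXY
  have norm_mul_cos {x : E} (hx : angle x d = angle X Y / 2) :
      ‖x‖ * cos (angle X Y / 2) = ⟪x, d⟫ := by
    rw [← cos_angle_mul_norm_mul_norm, hx, hd, mul_one, mul_comm]
  refine ⟨d, hd, fun l hl => norm_mul_le_inner_of_mem_span (cos_half_angle_pos hXY).le ?_ (hv l hl)⟩
  rintro x (rfl | rfl)
  exacts [(norm_mul_cos hXd).le, (norm_mul_cos hYd).le]

theorem a_path_angle_monotone_general {X Y : E} (hX : X ≠ 0) (hY : Y ≠ 0) (hXY : angle X Y ≠ π)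
    {v : ℕ → E} {m : ℕ} (hv : ∀ l < m, v (l + 1) - v l ∈ Submodule.span ℝ≥0 {X, Y}) :
    IsAngleMonotone v m (angle X Y) ∧
      ∑ l ∈ Finset.range m, ‖v (l + 1) - v l‖ ≤ 1 / cos (angle X Y / 2) * ‖v m - v 0‖ :=
  have hmono := isAngleMonotone_of_mem_span hX hY hXY hv
  ⟨hmono, hmono.sum_norm_le (cos_half_angle_pos hXY)⟩

theorem sub_ne_zero_and_angle_ne_pi_of_not_collinear {A B C : E}
    (h : ¬ Collinear ℝ ({A, B, C} : Set E)) :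
    B - A ≠ 0 ∧ C - A ≠ 0 ∧ angle (B - A) (C - A) ≠ π := by
  rw [Set.insert_comm, EuclideanGeometry.collinear_iff_eq_or_eq_or_angle_eq_zero_or_angle_eq_pi]
    at h
  push Not at h
  exact ⟨sub_ne_zero.2 h.1, sub_ne_zero.2 h.2.1, h.2.2.2⟩

end AngleMonotone

theorem dot2_eq_inner (u v : ℂ) : dot2 u v = ⟪u, v⟫ := by
  simp [dot2, Complex.inner, mul_comm]

theorem InWedge.sub_mem_span {X Y q p : ℂ} (h : InWedge X Y q p) :
    p - q ∈ Submodule.span ℝ≥0 {X, Y} := by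
  obtain ⟨s, u, hs, hu, hpq⟩ := h
  exact Submodule.mem_span_pair.2 ⟨⟨s, hs⟩, ⟨u, hu⟩, hpq.symm⟩

/-- Along an `a`-path `v 0, …, v m` of a 3-sweep graph (each `v (l+1)`
an `a`-nearest neighbor of `v l`), every edge vector lies in the fixed cone of angle
`θ_a` spanned by `B - A` and `C - A`; hence the path is angle-monotone of width `θ_a`
and its length is at most `(1 / cos (θ_a / 2)) · ‖v m - v 0‖`. -/
theorem a_path_angle_monotone (A B C : ℂ)
    (hacuteA : 0 < dot2 (B - A) (C - A)) (hacuteB : 0 < dot2 (A - B) (C - B))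
    (hacuteC : 0 < dot2 (A - C) (B - C))
    (hnd : ¬ Collinear ℝ ({A, B, C} : Set ℂ))
    (S : Finset ℂ) (m : ℕ) (v : ℕ → ℂ)
    (hchain : ∀ l < m, IsSweepNbr (B - A) (C - A) S (v l) (v (l + 1))) :
    (∀ l < m, ∃ s u : ℝ, 0 ≤ s ∧ 0 ≤ u ∧ v (l + 1) - v l = s • (B - A) + u • (C - A)) ∧
    (∃ d : ℂ, ‖d‖ = 1 ∧ ∀ l < m,
      ‖v (l + 1) - v l‖ * Real.cos (InnerProductGeometry.angle (B - A) (C - A) / 2) ≤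
        dot2 (v (l + 1) - v l) d) ∧
    ∑ l ∈ Finset.range m, ‖v (l + 1) - v l‖ ≤
      (1 / Real.cos (InnerProductGeometry.angle (B - A) (C - A) / 2)) * ‖v m - v 0‖ := by
  obtain ⟨hBA, hCA, hBAC⟩ := sub_ne_zero_and_angle_ne_pi_of_not_collinear hnd
  have hwedge : ∀ l < m, InWedge (B - A) (C - A) (v l) (v (l + 1)) :=
    fun l hl => (hchain l hl).2.2.1
  simp only [dot2_eq_inner]
  exact ⟨hwedge, a_path_angle_monotone_general hBA hCA hBAC fun l hl => (hwedge l hl).sub_mem_span⟩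
end
end
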